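/- Let 0 < r < ∞ and let κ_r be the unique number in (0,∞) with lim_{k→∞} (1/k) log Σ_{σ∈Ω_k} (μ_h(J_σ) ‖φ'_σ‖^r)^{κ_r/(r+κ_r)} = 0. Then the κ_r-dimensional lower quantization coefficient of order r of μ_h is positive: liminf_{n→∞} n · V_{n,r}(μ_h)^{κ_r/r} > 0. -/

import Mathlib

open MeasureTheory Filter Metric

noncomputable section

/-- A cookie-cutter system on `J = [0,1]`. -/
structure CookieCutter where
  N : ℕ
  hN : 2 ≤ N
  Jsub : Fin N → Set ℝ
  f : ℝ → ℝ
  φ : Fin N → ℝ → ℝ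
  c : ℝ
  γ : ℝ
  b : ℝ
  B : ℝ
  hJsub_sub : ∀ j, Jsub j ⊆ Set.Icc 0 1
  hJsub_interval : ∀ j, ∃ u v : ℝ, u ≤ v ∧ Jsub j = Set.Icc u v
  hJsub_disj : ∀ i j, i ≠ j → Disjoint (Jsub i) (Jsub j)
  hbij : ∀ j, Set.BijOn f (Jsub j) (Set.Icc 0 1)
  hφ_maps : ∀ j, ∀ x ∈ Set.Icc (0:ℝ) 1, φ j x ∈ Jsub j
  hφ_rinv : ∀ j, ∀ x ∈ Set.Icc (0:ℝ) 1, f (φ j x) = x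
  hφ_linv : ∀ j, ∀ x ∈ Jsub j, φ j (f x) = x
  hfdiff : ∀ j, ∀ x ∈ Jsub j, DifferentiableAt ℝ f x
  hφdiff : ∀ j, ∀ x ∈ Set.Icc (0:ℝ) 1, DifferentiableAt ℝ (φ j) x
  hc : 0 < c
  hγ : γ ∈ Set.Ioc (0:ℝ) 1
  hHolder : ∀ j, ∀ x ∈ Jsub j, ∀ y ∈ Jsub j, |deriv f x - deriv f y| ≤ c * |x - y| ^ γ
  hb : IsGLB ((fun x => |deriv f x|) '' ⋃ j, Jsub j) b
  hB : IsLUB ((fun x => |deriv f x|) '' ⋃ j, Jsub j) B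
  hb1 : 1 < b

namespace CookieCutter

variable (cc : CookieCutter)

/-- `φ_σ = φ_{σ_1} ∘ ⋯ ∘ φ_{σ_n}` for a word `σ`. -/
def wordMap : List (Fin cc.N) → ℝ → ℝ
  | [] => id
  | j :: rest => cc.φ j ∘ wordMap rest

/-- The basic interval `J_σ = φ_σ(J)`. -/
def Jc (σ : List (Fin cc.N)) : Set ℝ := cc.wordMap σ '' Set.Icc 0 1

/-- The diameter `|J_σ|`. -/
def diamJ (σ : List (Fin cc.N)) : ℝ := Metric.diam (cc.Jc σ)

/-- `‖φ'_σ‖ = sup_{x ∈ J} |φ'_σ(x)|`. -/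
def φnorm (σ : List (Fin cc.N)) : ℝ :=
  sSup ((fun x => |deriv (cc.wordMap σ) x|) '' Set.Icc 0 1)

/-- The distortion constant `ξ = exp (c / (b^γ − 1))`. -/
def xi : ℝ := Real.exp (cc.c / (cc.b ^ cc.γ - 1))

/-- The cookie-cutter set `E = ⋂_{n ≥ 1} ⋃_{σ ∈ Ω_n} J_σ`. -/
def E : Set ℝ := ⋂ (n : ℕ) (_ : 1 ≤ n), ⋃ σ : Fin n → Fin cc.N, cc.Jc (List.ofFn σ)

/-- `η = ξ^{9h}`. -/
def eta (h : ℝ) : ℝ := cc.xi ^ ((9:ℝ) * h)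

/-- `L = η³ ξ^{3h}`. -/
def Lconst (h : ℝ) : ℝ := (cc.eta h) ^ 3 * cc.xi ^ ((3:ℝ) * h)

/-- A Gibbs-like measure for the cookie-cutter system: a Borel probability measure
supported on `E` with `η⁻¹|J_σ|^h ≤ μ(J_σ) ≤ η|J_σ|^h` for every word `σ`. -/
def IsGibbsLike (μ : Measure ℝ) (h : ℝ) : Prop :=
  IsProbabilityMeasure μ ∧ μ (cc.Eᶜ) = 0 ∧
    ∀ σ : List (Fin cc.N), σ ≠ [] →
      (cc.eta h)⁻¹ * cc.diamJ σ ^ h ≤ (μ (cc.Jc σ)).toReal ∧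
      (μ (cc.Jc σ)).toReal ≤ cc.eta h * cc.diamJ σ ^ h

/-- A finite maximal antichain in `Ω`. -/
def IsFMA (Γ : Finset (List (Fin cc.N))) : Prop :=
  (∀ σ ∈ Γ, σ ≠ []) ∧
  (∀ ω : ℕ → Fin cc.N, ∃ k : ℕ, 1 ≤ k ∧ (List.ofFn fun i : Fin k => ω i) ∈ Γ) ∧
  ∀ σ ∈ Γ, ∀ τ ∈ Γ, σ <+: τ → σ = τ

end CookieCutter

/-- The `n`-th quantization error of order `r`. -/
def Vnr (μ : Measure ℝ) (n : ℕ) (r : ℝ) : ℝ :=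
  sInf ((fun α : Finset ℝ => ∫ x, Metric.infDist x (α : Set ℝ) ^ r ∂μ) ''
    {α : Finset ℝ | α.Nonempty ∧ α.card ≤ n})

/-- The auxiliary quantization error `u_{n,r}` with `U = (0,1)`. -/
def unr (μ : Measure ℝ) (n : ℕ) (r : ℝ) : ℝ :=
  sInf ((fun α : Finset ℝ =>
      ∫ x, Metric.infDist x ((α : Set ℝ) ∪ (Set.Ioo (0:ℝ) 1)ᶜ) ^ r ∂μ) ''
    {α : Finset ℝ | α.card ≤ n})


/-!
A Gibbs-like measure is `h`-Frostman: bounded distortion makes every cylinder comparable to its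
children, so the cylinders of size about `ρ` that meet a ball of radius `ρ` are disjoint intervals
of mass `O(ρ ^ h)` inside the concentric ball of radius `2ρ`; comparing them with Lebesgue measure
bounds their total mass by `O(ρ ^ h)`.

The defining equation of `κ` and the Gibbs property give `0 ≤ Q ((h + r) * κ / (r + κ))`, and since
`Q` decreases strictly and vanishes at `h`, this forces `κ ≤ h`; so the measure is also
`κ`-Frostman. Finally, the `n` balls of radius `ρ` about the points of a codebook carry at most half
of the mass of an `s`-Frostman measure when `ρ ^ s` is a small multiple of `1 / n`, and the other
half contributes at least `ρ ^ r / 2` to the quantization error.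
-/

section GrowthRate

/-- The sequence `a` has exponential growth rate `g`, meaning `(1 / k) log a_k → g`. The pressure
and the equation defining `κ` are statements of this form. -/
def HasGrowthRate (a : ℕ → ℝ) (g : ℝ) : Prop :=
  Tendsto (fun k : ℕ => (1 / (k : ℝ)) * Real.log (a k)) atTop (nhds g)

lemma HasGrowthRate.le_add_log {a p : ℕ → ℝ} {A P C β : ℝ} (ha : HasGrowthRate a A)
    (hp : HasGrowthRate p P) (hC : 0 < C) (hβ : 0 < β) (ha_pos : ∀ᶠ k in atTop, 0 < a k)
    (hle : ∀ᶠ k in atTop, a k ≤ C * β ^ k * p k) : A ≤ P + Real.log β := by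
  have hlim : Tendsto (fun k : ℕ =>
      (1 / (k : ℝ)) * Real.log C + (1 / (k : ℝ)) * Real.log (p k) + Real.log β) atTop
      (nhds (P + Real.log β)) := by
    simpa only [zero_mul, zero_add] using
      ((tendsto_one_div_atTop_nhds_zero_nat.mul_const (Real.log C)).add hp).add_const (Real.log β)
  refine le_of_tendsto_of_tendsto ha hlim ?_
  filter_upwards [ha_pos, hle, eventually_gt_atTop 0] with k hak hk hk0
  have hCβ : 0 < C * β ^ k := by positivity
  have hpk : 0 < p k := pos_of_mul_pos_right (hak.trans_le hk) hCβ.le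
  calc (1 / (k : ℝ)) * Real.log (a k)
      ≤ (1 / (k : ℝ)) * Real.log (C * β ^ k * p k) := by gcongr
    _ = (1 / (k : ℝ)) * Real.log C + (1 / (k : ℝ)) * Real.log (p k) + Real.log β := by
        rw [Real.log_mul hCβ.ne' hpk.ne', Real.log_mul hC.ne' (by positivity), Real.log_pow]
        field_simp
        ring

end GrowthRate

section Quantization

/-- `μ` satisfies the Frostman condition of exponent `s` with constant `C`. Only radii below `1` are
considered, so that the exponent may be lowered without changing the constant. -/
def FrostmanWith {X : Type*} [PseudoMetricSpace X] [MeasurableSpace X] (C s : ℝ) (μ : Measure X) :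
    Prop :=
  ∀ (x : X) (ρ : ℝ), 0 < ρ → ρ < 1 → μ.real (closedBall x ρ) ≤ C * ρ ^ s

section Metric

variable {X : Type*} [PseudoMetricSpace X] [MeasurableSpace X] {μ : Measure X}

lemma FrostmanWith.mono_exponent {C s t : ℝ} (hμ : FrostmanWith C s μ) (hC : 0 ≤ C) (hts : t ≤ s) :
    FrostmanWith C t μ := fun x ρ hρ hρ1 =>
  (hμ x ρ hρ hρ1).trans <|
    mul_le_mul_of_nonneg_left (Real.rpow_le_rpow_of_exponent_ge hρ hρ1.le hts) hC

lemma measureReal_biUnion_closedBall_le {ρ δ : ℝ} (hball : ∀ x, μ.real (closedBall x ρ) ≤ δ)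
    (α : Finset X) : μ.real (⋃ a ∈ α, closedBall a ρ) ≤ α.card * δ :=
  (measureReal_biUnion_finset_le _ _).trans <| by
    simpa only [nsmul_eq_mul] using Finset.sum_le_card_nsmul α _ δ fun a _ => hball a

lemma integrable_infDist_rpow [OpensMeasurableSpace X] [IsFiniteMeasure μ] {s : Set X}
    (hs : IsCompact s) (hμs : ∀ᵐ x ∂μ, x ∈ s) {r : ℝ} (hr : 0 ≤ r) (t : Set X) :
    Integrable (fun x => infDist x t ^ r) μ := by
  have hcont : Continuous fun x => infDist x t ^ r :=
    (continuous_infDist_pt t).rpow_const fun _ => Or.inr hr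
  obtain ⟨M, hM⟩ := hs.exists_bound_of_continuousOn hcont.continuousOn
  exact Integrable.of_bound hcont.aestronglyMeasurable M (hμs.mono hM)

lemma rpow_mul_measureReal_compl_le_integral_infDist_rpow [IsFiniteMeasure μ] {α : Finset X}
    (hα : α.Nonempty) {r ρ : ℝ} (hr : 0 ≤ r) (hρ : 0 ≤ ρ)
    (hint : Integrable (fun x => infDist x (α : Set X) ^ r) μ) :
    ρ ^ r * μ.real (⋃ a ∈ α, closedBall a ρ)ᶜ ≤ ∫ x, infDist x (α : Set X) ^ r ∂μ := by
  have hfar : (⋃ a ∈ α, closedBall a ρ)ᶜ ⊆ {x | ρ ^ r ≤ infDist x (α : Set X) ^ r} := by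
    intro x hx
    refine Real.rpow_le_rpow hρ ((le_infDist hα.to_set).2 fun a ha => ?_) hr
    by_contra! hlt
    exact hx (Set.mem_iUnion₂.2 ⟨a, ha, hlt.le⟩)
  calc ρ ^ r * μ.real (⋃ a ∈ α, closedBall a ρ)ᶜ
      ≤ ρ ^ r * μ.real {x | ρ ^ r ≤ infDist x (α : Set X) ^ r} :=
        mul_le_mul_of_nonneg_left (measureReal_mono hfar) (Real.rpow_nonneg hρ r)
    _ ≤ ∫ x, infDist x (α : Set X) ^ r ∂μ :=
        mul_meas_ge_le_integral_of_nonneg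
          (ae_of_all μ fun _ => Real.rpow_nonneg infDist_nonneg r) hint _

end Metric

variable {μ : Measure ℝ} [IsProbabilityMeasure μ] {s : Set ℝ}

lemma rpow_mul_one_sub_le_Vnr (hs : IsCompact s) (hμs : ∀ᵐ x ∂μ, x ∈ s) {r ρ δ : ℝ} (hr : 0 ≤ r)
    (hρ : 0 ≤ ρ) (hball : ∀ x, μ.real (closedBall x ρ) ≤ δ) {n : ℕ} (hn : 0 < n) :
    ρ ^ r * (1 - n * δ) ≤ Vnr μ n r := by
  refine le_csInf ⟨_, {0}, by simpa using Nat.one_le_iff_ne_zero.2 hn.ne', rfl⟩ ?_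
  rintro _ ⟨α, ⟨hα, hcard⟩, rfl⟩
  have hδ : 0 ≤ δ := measureReal_nonneg.trans (hball 0)
  calc ρ ^ r * (1 - n * δ) ≤ ρ ^ r * (1 - α.card * δ) := by gcongr
    _ ≤ ρ ^ r * (1 - μ.real (⋃ a ∈ α, closedBall a ρ)) := by
        gcongr
        exact measureReal_biUnion_closedBall_le hball α
    _ = ρ ^ r * μ.real (⋃ a ∈ α, closedBall a ρ)ᶜ := by
        rw [probReal_compl_eq_one_sub
          (Finset.measurableSet_biUnion α fun _ _ => measurableSet_closedBall)]
    _ ≤ ∫ x, infDist x (α : Set ℝ) ^ r ∂μ :=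
        rpow_mul_measureReal_compl_le_integral_infDist_rpow hα hr hρ
          (integrable_infDist_rpow hs hμs hr α)

lemma FrostmanWith.exists_pos_eventually_le_mul_Vnr_rpow {C t r : ℝ} (hμ : FrostmanWith C t μ)
    (hC : 0 < C) (ht : 0 < t) (hr : 0 < r) (hs : IsCompact s) (hμs : ∀ᵐ x ∂μ, x ∈ s) :
    ∃ c : ℝ, 0 < c ∧ ∀ᶠ n : ℕ in atTop, c ≤ (n : ℝ) * Vnr μ n r ^ (t / r) := by
  refine ⟨(2 * C)⁻¹ * (1 / 2) ^ (t / r), by positivity, ?_⟩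
  filter_upwards [eventually_gt_atTop 0,
    tendsto_natCast_atTop_atTop.eventually_gt_atTop (2 * C)⁻¹] with n hn hnC
  have hx0 : 0 < (2 * C * n)⁻¹ := by positivity
  have hx1 : (2 * C * n)⁻¹ < 1 :=
    inv_lt_one_of_one_lt₀ ((inv_lt_iff_one_lt_mul₀' (by positivity)).1 hnC)
  obtain ⟨ρ, hρ0, hρ1, hρt⟩ : ∃ ρ : ℝ, 0 < ρ ∧ ρ < 1 ∧ ρ ^ t = (2 * C * n)⁻¹ :=
    ⟨(2 * C * n)⁻¹ ^ t⁻¹, Real.rpow_pos_of_pos hx0 _, Real.rpow_lt_one hx0.le hx1 (inv_pos.2 ht),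
      Real.rpow_inv_rpow hx0.le ht.ne'⟩
  have hV : ρ ^ r * (1 / 2) ≤ Vnr μ n r := by
    convert rpow_mul_one_sub_le_Vnr hs hμs hr.le hρ0.le (fun x => hμ x ρ hρ0 hρ1) hn using 2
    rw [hρt]
    field_simp
    norm_num
  calc (2 * C)⁻¹ * (1 / 2) ^ (t / r) = n * (ρ ^ t * (1 / 2) ^ (t / r)) := by
        rw [hρt]
        field_simp
    _ = n * (ρ ^ r * (1 / 2)) ^ (t / r) := by
        rw [Real.mul_rpow (by positivity) (by positivity), ← Real.rpow_mul hρ0.le,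
          mul_div_cancel₀ _ hr.ne']
    _ ≤ n * Vnr μ n r ^ (t / r) := by gcongr

end Quantization

lemma volume_eq_ofReal_diam {s : Set ℝ} (hconn : IsConnected s) (hcomp : IsCompact s) :
    volume s = ENNReal.ofReal (diam s) := by
  rw [Real.diam_eq hcomp.isBounded, ← Real.volume_Icc, ← eq_Icc_of_connected_compact hconn hcomp]

lemma sum_range_inv_pow_succ_le {w : ℝ} (hw : 1 < w) (n : ℕ) :
    ∑ i ∈ Finset.range n, w⁻¹ ^ (i + 1) ≤ (w - 1)⁻¹ := by
  have hw0 : 0 < w := one_pos.trans hw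
  have hw1 : w⁻¹ < 1 := inv_lt_one_of_one_lt₀ hw
  have hgeom : ∑ i ∈ Finset.range n, w⁻¹ ^ i ≤ (1 - w⁻¹)⁻¹ := by
    rw [← tsum_geometric_of_lt_one (by positivity) hw1]
    exact (summable_geometric_of_lt_one (by positivity) hw1).sum_le_tsum _
      fun _ _ => by positivity
  calc ∑ i ∈ Finset.range n, w⁻¹ ^ (i + 1) = w⁻¹ * ∑ i ∈ Finset.range n, w⁻¹ ^ i := by
        simp only [pow_succ', Finset.mul_sum]
    _ ≤ w⁻¹ * (1 - w⁻¹)⁻¹ := by gcongr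
    _ = (w - 1)⁻¹ := by rw [← mul_inv, mul_sub, mul_one, mul_inv_cancel₀ hw0.ne']

namespace CookieCutter

open Set

variable (cc : CookieCutter)

section Derivatives

lemma b_pos : 0 < cc.b := one_pos.trans cc.hb1

lemma inv_b_nonneg : 0 ≤ cc.b⁻¹ := inv_nonneg.2 cc.b_pos.le

lemma inv_b_lt_one : cc.b⁻¹ < 1 := inv_lt_one_of_one_lt₀ cc.hb1

variable {cc} {j : Fin cc.N} {x y : ℝ}

lemma b_le_abs_deriv_f (hx : x ∈ cc.Jsub j) : cc.b ≤ |deriv cc.f x| :=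
  cc.hb.1 ⟨x, mem_iUnion.2 ⟨j, hx⟩, rfl⟩

lemma abs_deriv_f_le_B (hx : x ∈ cc.Jsub j) : |deriv cc.f x| ≤ cc.B :=
  cc.hB.1 ⟨x, mem_iUnion.2 ⟨j, hx⟩, rfl⟩

lemma abs_deriv_f_pos (hx : x ∈ cc.Jsub j) : 0 < |deriv cc.f x| :=
  cc.b_pos.trans_le (b_le_abs_deriv_f hx)

lemma abs_deriv_f_le_exp_mul (hx : x ∈ cc.Jsub j) (hy : y ∈ cc.Jsub j) :
    |deriv cc.f x| ≤ Real.exp (cc.c * |x - y| ^ cc.γ) * |deriv cc.f y| := by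
  have hholder := cc.hHolder j x hx y hy
  have hy1 : 1 ≤ |deriv cc.f y| := cc.hb1.le.trans (b_le_abs_deriv_f hy)
  have hpos : 0 ≤ cc.c * |x - y| ^ cc.γ := (abs_nonneg _).trans hholder
  calc |deriv cc.f x| ≤ cc.c * |x - y| ^ cc.γ + |deriv cc.f y| := by
        linarith [abs_sub_abs_le_abs_sub (deriv cc.f x) (deriv cc.f y)]
    _ ≤ cc.c * |x - y| ^ cc.γ * |deriv cc.f y| + |deriv cc.f y| :=
        add_le_add_left (le_mul_of_one_le_right hpos hy1) _
    _ = (cc.c * |x - y| ^ cc.γ + 1) * |deriv cc.f y| := by ring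
    _ ≤ Real.exp (cc.c * |x - y| ^ cc.γ) * |deriv cc.f y| := by
        gcongr
        exact Real.add_one_le_exp _

lemma abs_deriv_φ (j : Fin cc.N) (hx : x ∈ Icc (0 : ℝ) 1) :
    |deriv (cc.φ j) x| = |deriv cc.f (cc.φ j x)|⁻¹ := by
  have hcomp : HasDerivAt (cc.f ∘ cc.φ j) (deriv cc.f (cc.φ j x) * deriv (cc.φ j) x) x :=
    (cc.hfdiff j _ (cc.hφ_maps j x hx)).hasDerivAt.comp x (cc.hφdiff j x hx).hasDerivAt
  have hid : HasDerivWithinAt (cc.f ∘ cc.φ j) 1 (Icc 0 1) x :=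
    (hasDerivWithinAt_id x _).congr (cc.hφ_rinv j) (cc.hφ_rinv j x hx)
  have hmul : deriv cc.f (cc.φ j x) * deriv (cc.φ j) x = 1 :=
    (uniqueDiffOn_Icc zero_lt_one x hx).eq_deriv _ hcomp.hasDerivWithinAt hid
  exact eq_inv_of_mul_eq_one_right (by rw [← abs_mul, hmul, abs_one])

lemma abs_deriv_φ_le (j : Fin cc.N) (hx : x ∈ Icc (0 : ℝ) 1) : |deriv (cc.φ j) x| ≤ cc.b⁻¹ := by
  rw [abs_deriv_φ j hx]
  exact inv_anti₀ cc.b_pos (b_le_abs_deriv_f (cc.hφ_maps j x hx))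

lemma inv_B_le_abs_deriv_φ (j : Fin cc.N) (hx : x ∈ Icc (0 : ℝ) 1) :
    cc.B⁻¹ ≤ |deriv (cc.φ j) x| := by
  rw [abs_deriv_φ j hx]
  exact inv_anti₀ (abs_deriv_f_pos (cc.hφ_maps j x hx)) (abs_deriv_f_le_B (cc.hφ_maps j x hx))

lemma abs_deriv_φ_le_exp_mul (j : Fin cc.N) (hx : x ∈ Icc (0 : ℝ) 1) (hy : y ∈ Icc (0 : ℝ) 1) :
    |deriv (cc.φ j) x| ≤
      Real.exp (cc.c * |cc.φ j x - cc.φ j y| ^ cc.γ) * |deriv (cc.φ j) y| := by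
  have hx' := cc.hφ_maps j x hx
  have hy' := cc.hφ_maps j y hy
  rw [abs_deriv_φ j hx, abs_deriv_φ j hy, ← div_eq_mul_inv, le_div_iff₀ (abs_deriv_f_pos hy'),
    inv_mul_le_iff₀ (abs_deriv_f_pos hx'), mul_comm, abs_sub_comm]
  exact abs_deriv_f_le_exp_mul hy' hx'

end Derivatives

section WordMap

variable {cc} {x y : ℝ}

lemma φ_mem_Icc (j : Fin cc.N) (hx : x ∈ Icc (0 : ℝ) 1) : cc.φ j x ∈ Icc (0 : ℝ) 1 :=
  cc.hJsub_sub j (cc.hφ_maps j x hx)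

lemma wordMap_mem_Icc (σ : List (Fin cc.N)) (hx : x ∈ Icc (0 : ℝ) 1) :
    cc.wordMap σ x ∈ Icc (0 : ℝ) 1 := by
  induction σ with
  | nil => exact hx
  | cons j σ ih => exact φ_mem_Icc j ih

lemma wordMap_append (σ τ : List (Fin cc.N)) :
    cc.wordMap (σ ++ τ) = cc.wordMap σ ∘ cc.wordMap τ := by
  induction σ with
  | nil => rfl
  | cons j σ ih => simp only [List.cons_append, wordMap, ih, Function.comp_assoc]

lemma differentiableAt_wordMap (σ : List (Fin cc.N)) (hx : x ∈ Icc (0 : ℝ) 1) :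
    DifferentiableAt ℝ (cc.wordMap σ) x := by
  induction σ with
  | nil => exact differentiableAt_id
  | cons j σ ih => exact (cc.hφdiff j _ (wordMap_mem_Icc σ hx)).comp x ih

lemma continuousOn_wordMap (σ : List (Fin cc.N)) : ContinuousOn (cc.wordMap σ) (Icc 0 1) :=
  fun _ hx => (differentiableAt_wordMap σ hx).continuousAt.continuousWithinAt

lemma deriv_wordMap_append (σ τ : List (Fin cc.N)) (hx : x ∈ Icc (0 : ℝ) 1) :
    deriv (cc.wordMap (σ ++ τ)) x =
      deriv (cc.wordMap σ) (cc.wordMap τ x) * deriv (cc.wordMap τ) x := by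
  rw [wordMap_append]
  exact deriv_comp x (differentiableAt_wordMap σ (wordMap_mem_Icc τ hx))
    (differentiableAt_wordMap τ hx)

lemma abs_deriv_wordMap_cons (j : Fin cc.N) (σ : List (Fin cc.N)) (hx : x ∈ Icc (0 : ℝ) 1) :
    |deriv (cc.wordMap (j :: σ)) x| =
      |deriv (cc.φ j) (cc.wordMap σ x)| * |deriv (cc.wordMap σ) x| := by
  rw [← abs_mul]
  exact congrArg abs (deriv_wordMap_append [j] σ hx)

lemma abs_deriv_wordMap_pos (σ : List (Fin cc.N)) (hx : x ∈ Icc (0 : ℝ) 1) :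
    0 < |deriv (cc.wordMap σ) x| := by
  induction σ with
  | nil => simp [wordMap]
  | cons j σ ih =>
    have hx' := wordMap_mem_Icc σ hx
    rw [abs_deriv_wordMap_cons j σ hx, abs_deriv_φ j hx']
    exact mul_pos (inv_pos.2 (abs_deriv_f_pos (cc.hφ_maps j _ hx'))) ih

lemma abs_deriv_wordMap_le_pow (σ : List (Fin cc.N)) (hx : x ∈ Icc (0 : ℝ) 1) :
    |deriv (cc.wordMap σ) x| ≤ cc.b⁻¹ ^ σ.length := by
  induction σ with
  | nil => simp [wordMap]
  | cons j σ ih =>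
    rw [abs_deriv_wordMap_cons j σ hx, List.length_cons, pow_succ']
    exact mul_le_mul (abs_deriv_φ_le j (wordMap_mem_Icc σ hx)) ih (abs_nonneg _) cc.inv_b_nonneg

end WordMap

section Cylinders

variable {cc}

lemma isCompact_Jc (σ : List (Fin cc.N)) : IsCompact (cc.Jc σ) :=
  isCompact_Icc.image_of_continuousOn (continuousOn_wordMap σ)

lemma isConnected_Jc (σ : List (Fin cc.N)) : IsConnected (cc.Jc σ) :=
  (isConnected_Icc zero_le_one).image _ (continuousOn_wordMap σ)

lemma volume_Jc (σ : List (Fin cc.N)) : volume (cc.Jc σ) = ENNReal.ofReal (cc.diamJ σ) :=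
  volume_eq_ofReal_diam (isConnected_Jc σ) (isCompact_Jc σ)

variable (cc) in
lemma Jc_nil : cc.Jc [] = Icc 0 1 := image_id _

variable (cc) in
lemma diamJ_nil : cc.diamJ [] = 1 := by
  rw [diamJ, Jc_nil, Real.diam_Icc zero_le_one, sub_zero]

lemma Jc_append_subset (σ τ : List (Fin cc.N)) : cc.Jc (σ ++ τ) ⊆ cc.Jc σ := by
  rintro _ ⟨x, hx, rfl⟩
  exact ⟨_, wordMap_mem_Icc τ hx, by rw [wordMap_append, Function.comp_apply]⟩

lemma mem_Jsub_and_f_mem_Jc_of_mem_Jc_cons {j : Fin cc.N} {σ : List (Fin cc.N)} {x : ℝ}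
    (hx : x ∈ cc.Jc (j :: σ)) : x ∈ cc.Jsub j ∧ cc.f x ∈ cc.Jc σ := by
  obtain ⟨y, hy, rfl⟩ := hx
  have hy' := wordMap_mem_Icc σ hy
  exact ⟨cc.hφ_maps j _ hy', y, hy, (cc.hφ_rinv j _ hy').symm⟩

lemma eq_of_mem_Jc {σ τ : List (Fin cc.N)} (hlen : σ.length = τ.length) {x : ℝ}
    (hσ : x ∈ cc.Jc σ) (hτ : x ∈ cc.Jc τ) : σ = τ := by
  induction σ generalizing τ x with
  | nil => exact (List.length_eq_zero_iff.1 hlen.symm).symm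
  | cons i σ ih =>
    obtain _ | ⟨j, τ⟩ := τ
    · simp at hlen
    obtain ⟨hi, hfσ⟩ := mem_Jsub_and_f_mem_Jc_of_mem_Jc_cons hσ
    obtain ⟨hj, hfτ⟩ := mem_Jsub_and_f_mem_Jc_of_mem_Jc_cons hτ
    obtain rfl : i = j := by
      by_contra hij
      exact disjoint_left.1 (cc.hJsub_disj i j hij) hi hj
    rw [ih (Nat.succ.inj hlen) hfσ hfτ]

lemma pairwise_disjoint_Jc_append_singleton (σ : List (Fin cc.N)) :
    Pairwise fun i j => Disjoint (cc.Jc (σ ++ [i])) (cc.Jc (σ ++ [j])) := fun i j hij =>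
  disjoint_left.2 fun _ hi hj => hij <| by simpa using eq_of_mem_Jc (by simp) hi hj

variable (cc) in
lemma E_subset_Icc : cc.E ⊆ Icc 0 1 := fun x hx => by
  obtain ⟨σ, y, hy, rfl⟩ := mem_iUnion.1 (mem_iInter₂.1 hx 1 le_rfl)
  exact wordMap_mem_Icc _ hy

lemma Jc_inter_E_subset_iUnion (σ : List (Fin cc.N)) :
    cc.Jc σ ∩ cc.E ⊆ ⋃ j, cc.Jc (σ ++ [j]) := by
  rintro x ⟨hσ, hE⟩
  obtain ⟨τ, hτ⟩ := mem_iUnion.1 (mem_iInter₂.1 hE (σ.length + 1) (Nat.le_add_left 1 _))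
  obtain ⟨τ', j, hτj⟩ := List.eq_nil_or_concat' (List.ofFn τ) |>.resolve_left (by simp)
  have hlen : σ.length = τ'.length := by simpa using congrArg List.length hτj
  rw [hτj] at hτ
  obtain rfl : σ = τ' := eq_of_mem_Jc hlen hσ (Jc_append_subset τ' [j] hτ)
  exact mem_iUnion.2 ⟨j, hτ⟩

end Cylinders

section Distortion

variable {cc}

lemma abs_wordMap_sub_le_diamJ (σ : List (Fin cc.N)) {x y : ℝ} (hx : x ∈ Icc (0 : ℝ) 1)
    (hy : y ∈ Icc (0 : ℝ) 1) : |cc.wordMap σ x - cc.wordMap σ y| ≤ cc.diamJ σ :=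
  dist_le_diam_of_mem (isCompact_Jc σ).isBounded (mem_image_of_mem _ hx) (mem_image_of_mem _ hy)

lemma diamJ_le_of_abs_deriv_le (σ : List (Fin cc.N)) {M : ℝ}
    (hM : ∀ z ∈ Icc (0 : ℝ) 1, |deriv (cc.wordMap σ) z| ≤ M) : cc.diamJ σ ≤ M := by
  have hM0 : 0 ≤ M := (abs_nonneg _).trans (hM 0 (left_mem_Icc.2 zero_le_one))
  refine diam_le_of_forall_dist_le hM0 ?_
  rintro _ ⟨x, hx, rfl⟩ _ ⟨y, hy, rfl⟩
  calc dist (cc.wordMap σ x) (cc.wordMap σ y) ≤ M * ‖x - y‖ :=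
        (convex_Icc (0 : ℝ) 1).norm_image_sub_le_of_norm_deriv_le
          (fun _ hz => differentiableAt_wordMap σ hz) hM hy hx
    _ ≤ M := mul_le_of_le_one_right hM0 (Real.dist_le_of_mem_Icc_01 hx hy)

lemma exists_abs_deriv_wordMap_le_diamJ (σ : List (Fin cc.N)) :
    ∃ z ∈ Icc (0 : ℝ) 1, |deriv (cc.wordMap σ) z| ≤ cc.diamJ σ := by
  obtain ⟨z, hz, hslope⟩ := exists_deriv_eq_slope (cc.wordMap σ) zero_lt_one
    (continuousOn_wordMap σ) fun x hx =>
      (differentiableAt_wordMap σ (Ioo_subset_Icc_self hx)).differentiableWithinAt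
  refine ⟨z, Ioo_subset_Icc_self hz, ?_⟩
  rw [hslope, sub_zero, div_one]
  exact abs_wordMap_sub_le_diamJ σ (right_mem_Icc.2 zero_le_one) (left_mem_Icc.2 zero_le_one)

lemma diamJ_pos (σ : List (Fin cc.N)) : 0 < cc.diamJ σ := by
  obtain ⟨z, hz, hle⟩ := exists_abs_deriv_wordMap_le_diamJ σ
  exact (abs_deriv_wordMap_pos σ hz).trans_le hle

lemma diamJ_le_pow (σ : List (Fin cc.N)) : cc.diamJ σ ≤ cc.b⁻¹ ^ σ.length :=
  diamJ_le_of_abs_deriv_le σ fun _ => abs_deriv_wordMap_le_pow σ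

variable (cc) in
lemma xi_pos : 0 < cc.xi := Real.exp_pos _

lemma abs_deriv_wordMap_le_exp_sum_mul (σ : List (Fin cc.N)) {x y : ℝ}
    (hx : x ∈ Icc (0 : ℝ) 1) (hy : y ∈ Icc (0 : ℝ) 1) :
    |deriv (cc.wordMap σ) x| ≤
      Real.exp (cc.c * ∑ i ∈ Finset.range σ.length, (cc.b⁻¹ ^ (i + 1)) ^ cc.γ) *
        |deriv (cc.wordMap σ) y| := by
  induction σ with
  | nil => simp [wordMap]
  | cons j σ ih =>
    have hc := cc.hc
    have hγ := cc.hγ.1.le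
    have hcontract : |cc.wordMap (j :: σ) x - cc.wordMap (j :: σ) y| ≤ cc.b⁻¹ ^ (σ.length + 1) :=
      (abs_wordMap_sub_le_diamJ (j :: σ) hx hy).trans (diamJ_le_pow (j :: σ))
    rw [abs_deriv_wordMap_cons j σ hx, abs_deriv_wordMap_cons j σ hy, List.length_cons,
      Finset.sum_range_succ, mul_add, add_comm, Real.exp_add, mul_mul_mul_comm]
    refine mul_le_mul ?_ ih (abs_nonneg _) (by positivity)
    exact (abs_deriv_φ_le_exp_mul j (wordMap_mem_Icc σ hx) (wordMap_mem_Icc σ hy)).trans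
      (by gcongr; exact hcontract)

lemma abs_deriv_wordMap_le_xi_mul (σ : List (Fin cc.N)) {x y : ℝ}
    (hx : x ∈ Icc (0 : ℝ) 1) (hy : y ∈ Icc (0 : ℝ) 1) :
    |deriv (cc.wordMap σ) x| ≤ cc.xi * |deriv (cc.wordMap σ) y| := by
  have hc := cc.hc
  refine (abs_deriv_wordMap_le_exp_sum_mul σ hx hy).trans ?_
  rw [xi, div_eq_mul_inv]
  gcongr
  simpa only [← Real.rpow_pow_comm cc.inv_b_nonneg, Real.inv_rpow cc.b_pos.le] using
    sum_range_inv_pow_succ_le (Real.one_lt_rpow cc.hb1 cc.hγ.1) σ.length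

variable (cc) in
lemma one_le_xi : 1 ≤ cc.xi :=
  have hbγ : 1 < cc.b ^ cc.γ := Real.one_lt_rpow cc.hb1 cc.hγ.1
  Real.one_le_exp (div_nonneg cc.hc.le (sub_nonneg.2 hbγ.le))

variable (cc) in
lemma one_le_B : 1 ≤ cc.B :=
  have h0 : (0 : ℝ) ∈ Icc (0 : ℝ) 1 := left_mem_Icc.2 zero_le_one
  have hmem := cc.hφ_maps ⟨0, two_pos.trans_le cc.hN⟩ 0 h0
  cc.hb1.le.trans ((b_le_abs_deriv_f hmem).trans (abs_deriv_f_le_B hmem))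

variable (cc) in
lemma B_pos : 0 < cc.B := one_pos.trans_le cc.one_le_B

lemma diamJ_le_mul_diamJ_append_singleton (σ : List (Fin cc.N)) (j : Fin cc.N) :
    cc.diamJ σ ≤ cc.xi * cc.B * cc.diamJ (σ ++ [j]) := by
  obtain ⟨z, hz, hzd⟩ := exists_abs_deriv_wordMap_le_diamJ (σ ++ [j])
  have hxi := cc.xi_pos
  have hB := cc.B_pos
  have hchain : |deriv (cc.wordMap σ) (cc.φ j z)| * cc.B⁻¹ ≤ cc.diamJ (σ ++ [j]) :=
    calc |deriv (cc.wordMap σ) (cc.φ j z)| * cc.B⁻¹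
        ≤ |deriv (cc.wordMap σ) (cc.φ j z)| * |deriv (cc.φ j) z| := by
          gcongr
          exact inv_B_le_abs_deriv_φ j hz
      _ = |deriv (cc.wordMap (σ ++ [j])) z| := by
          rw [← abs_mul]
          exact congrArg abs (deriv_wordMap_append σ [j] hz).symm
      _ ≤ cc.diamJ (σ ++ [j]) := hzd
  calc cc.diamJ σ ≤ cc.xi * |deriv (cc.wordMap σ) (cc.φ j z)| :=
        diamJ_le_of_abs_deriv_le σ fun _ hw => abs_deriv_wordMap_le_xi_mul σ hw (φ_mem_Icc j hz)
    _ = cc.xi * cc.B * (|deriv (cc.wordMap σ) (cc.φ j z)| * cc.B⁻¹) := by field_simp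
    _ ≤ cc.xi * cc.B * cc.diamJ (σ ++ [j]) := by gcongr

end Distortion

section Frostman

variable {cc}

-- The tree form of recursion down to scale `ρ`: it replaces an argument over the finite maximal
-- antichain of words at which the diameter first drops to `ρ`.
lemma stopping_induction {ρ : ℝ} (hρ : 0 < ρ) {P : List (Fin cc.N) → Prop}
    (small : ∀ σ, cc.diamJ σ ≤ ρ → P σ)
    (step : ∀ σ, ρ < cc.diamJ σ → (∀ j, P (σ ++ [j])) → P σ) (σ : List (Fin cc.N)) : P σ := by
  obtain ⟨n, hn⟩ := exists_pow_lt_of_lt_one hρ cc.inv_b_lt_one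
  suffices H : ∀ m (τ : List (Fin cc.N)), n ≤ τ.length + m → P τ from H n σ (by omega)
  intro m
  induction m with
  | zero =>
    exact fun τ hτ => small τ <| (diamJ_le_pow τ).trans <|
      (pow_le_pow_of_le_one cc.inv_b_nonneg cc.inv_b_lt_one.le hτ).trans hn.le
  | succ m ih =>
    intro τ hτ
    rcases le_or_gt (cc.diamJ τ) ρ with hle | hlt
    · exact small τ hle
    · exact step τ hlt fun j => ih _ (by simp; omega)

variable (cc) in
lemma eta_pos (h : ℝ) : 0 < cc.eta h := Real.rpow_pos_of_pos cc.xi_pos _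

variable {μ : Measure ℝ} {h : ℝ}

lemma IsGibbsLike.ae_mem_E (hμ : cc.IsGibbsLike μ h) : ∀ᵐ x ∂μ, x ∈ cc.E := hμ.2.1

lemma IsGibbsLike.measure_inter_Jc_le_sum (hμ : cc.IsGibbsLike μ h) (s : Set ℝ)
    (σ : List (Fin cc.N)) : μ (s ∩ cc.Jc σ) ≤ ∑ j, μ (s ∩ cc.Jc (σ ++ [j])) := by
  have hsub : ∀ᵐ x ∂μ, x ∈ s ∩ cc.Jc σ → x ∈ ⋃ j, s ∩ cc.Jc (σ ++ [j]) := by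
    filter_upwards [hμ.ae_mem_E] with x hE ⟨hs, hσ⟩
    obtain ⟨j, hj⟩ := mem_iUnion.1 (Jc_inter_E_subset_iUnion σ ⟨hσ, hE⟩)
    exact mem_iUnion.2 ⟨j, hs, hj⟩
  exact (measure_mono_ae hsub).trans (measure_iUnion_fintype_le _ _)

lemma sum_volume_inter_Jc_le {s : Set ℝ} (hs : MeasurableSet s) (σ : List (Fin cc.N)) :
    ∑ j, volume (s ∩ cc.Jc (σ ++ [j])) ≤ volume (s ∩ cc.Jc σ) :=
  calc ∑ j, volume (s ∩ cc.Jc (σ ++ [j])) = volume (⋃ j, s ∩ cc.Jc (σ ++ [j])) := by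
        rw [← tsum_fintype (L := .unconditional _), measure_iUnion]
        · exact fun i j hij => (pairwise_disjoint_Jc_append_singleton σ hij).mono
            inter_subset_right inter_subset_right
        · exact fun j => hs.inter (isCompact_Jc _).measurableSet
    _ ≤ volume (s ∩ cc.Jc σ) :=
        measure_mono (iUnion_subset fun j => inter_subset_inter_right _ (Jc_append_subset σ [j]))

lemma IsGibbsLike.measure_Jc_le_of_diamJ_le (hμ : cc.IsGibbsLike μ h) (hh : 0 ≤ h)
    {σ : List (Fin cc.N)} (hσ : σ ≠ []) {A ρ : ℝ} (hρ : 0 < ρ) (hdiam : cc.diamJ σ ≤ ρ)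
    (hρA : ρ ≤ A * cc.diamJ σ) :
    μ (cc.Jc σ) ≤ ENNReal.ofReal (A * cc.eta h * ρ ^ (h - 1)) * volume (cc.Jc σ) := by
  have := hμ.1
  have hη := cc.eta_pos h
  have hd := diamJ_pos σ
  have hA : 0 < A := pos_of_mul_pos_left (hρ.trans_le hρA) hd.le
  rw [volume_Jc, ← ENNReal.ofReal_mul (by positivity), ← ofReal_measureReal]
  refine ENNReal.ofReal_le_ofReal ?_
  calc μ.real (cc.Jc σ) ≤ cc.eta h * cc.diamJ σ ^ h := (hμ.2.2 σ hσ).2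
    _ ≤ cc.eta h * ρ ^ h := by gcongr
    _ = cc.eta h * ρ ^ (h - 1) * ρ := by
        rw [mul_assoc, ← Real.rpow_add_one hρ.ne', sub_add_cancel]
    _ ≤ cc.eta h * ρ ^ (h - 1) * (A * cc.diamJ σ) := by gcongr
    _ = A * cc.eta h * ρ ^ (h - 1) * cc.diamJ σ := by ring

lemma IsGibbsLike.measure_closedBall_inter_Jc_le (hμ : cc.IsGibbsLike μ h) (hh : 0 ≤ h) (x : ℝ)
    {ρ : ℝ} (hρ : 0 < ρ) (hρ1 : ρ < 1) (σ : List (Fin cc.N))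
    (hσ : ρ ≤ cc.xi * cc.B * cc.diamJ σ) :
    μ (closedBall x ρ ∩ cc.Jc σ) ≤ ENNReal.ofReal (cc.xi * cc.B * cc.eta h * ρ ^ (h - 1)) *
      volume (closedBall x (2 * ρ) ∩ cc.Jc σ) := by
  induction σ using stopping_induction hρ with
  | small σ hdiam =>
    rcases eq_empty_or_nonempty (closedBall x ρ ∩ cc.Jc σ) with hempty | ⟨y, hyx, hyσ⟩
    · simp [hempty]
    have hsub : cc.Jc σ ⊆ closedBall x (2 * ρ) := fun z hz =>
      calc dist z x ≤ dist z y + dist y x := dist_triangle z y x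
        _ ≤ ρ + ρ := add_le_add
            ((dist_le_diam_of_mem (isCompact_Jc σ).isBounded hz hyσ).trans hdiam) hyx
        _ = 2 * ρ := (two_mul ρ).symm
    have hne : σ ≠ [] := by
      rintro rfl
      exact (hdiam.trans_lt hρ1).ne cc.diamJ_nil
    rw [inter_eq_right.2 hsub]
    exact (measure_mono inter_subset_right).trans
      (hμ.measure_Jc_le_of_diamJ_le hh hne hρ hdiam hσ)
  | step σ hdiam ih =>
    set D := ENNReal.ofReal (cc.xi * cc.B * cc.eta h * ρ ^ (h - 1))
    calc μ (closedBall x ρ ∩ cc.Jc σ) ≤ ∑ j, μ (closedBall x ρ ∩ cc.Jc (σ ++ [j])) :=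
          hμ.measure_inter_Jc_le_sum _ σ
      _ ≤ ∑ j, D * volume (closedBall x (2 * ρ) ∩ cc.Jc (σ ++ [j])) :=
          Finset.sum_le_sum fun j _ =>
            ih j (hdiam.le.trans (diamJ_le_mul_diamJ_append_singleton σ j))
      _ = D * ∑ j, volume (closedBall x (2 * ρ) ∩ cc.Jc (σ ++ [j])) := (Finset.mul_sum ..).symm
      _ ≤ D * volume (closedBall x (2 * ρ) ∩ cc.Jc σ) := by
          gcongr
          exact sum_volume_inter_Jc_le measurableSet_closedBall σ

lemma IsGibbsLike.frostmanWith (hμ : cc.IsGibbsLike μ h) (hh : 0 ≤ h) :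
    FrostmanWith (4 * (cc.xi * cc.B * cc.eta h)) h μ := by
  intro x ρ hρ hρ1
  have hη := cc.eta_pos h
  have hxi := cc.xi_pos
  have hB := cc.B_pos
  have hroot : ρ ≤ cc.xi * cc.B * cc.diamJ [] := by
    rw [diamJ_nil, mul_one]
    exact hρ1.le.trans (one_le_mul_of_one_le_of_one_le cc.one_le_xi cc.one_le_B)
  have hball : ∀ᵐ y ∂μ, y ∈ closedBall x ρ → y ∈ closedBall x ρ ∩ cc.Jc [] := by
    filter_upwards [hμ.ae_mem_E] with y hE hy
    exact ⟨hy, cc.Jc_nil ▸ cc.E_subset_Icc hE⟩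
  refine ENNReal.toReal_le_of_le_ofReal (by positivity) ?_
  calc μ (closedBall x ρ) ≤ μ (closedBall x ρ ∩ cc.Jc []) := measure_mono_ae hball
    _ ≤ ENNReal.ofReal (cc.xi * cc.B * cc.eta h * ρ ^ (h - 1)) *
          volume (closedBall x (2 * ρ) ∩ cc.Jc []) :=
        hμ.measure_closedBall_inter_Jc_le hh x hρ hρ1 [] hroot
    _ ≤ ENNReal.ofReal (cc.xi * cc.B * cc.eta h * ρ ^ (h - 1)) *
          volume (closedBall x (2 * ρ)) := by
        gcongr
        exact inter_subset_left
    _ = ENNReal.ofReal (4 * (cc.xi * cc.B * cc.eta h) * ρ ^ h) := by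
        rw [Real.volume_closedBall, ← ENNReal.ofReal_mul (by positivity),
          Real.rpow_sub_one hρ.ne']
        congr 1
        field_simp
        ring

end Frostman

section Pressure

variable {cc}

lemma bddAbove_abs_deriv_wordMap (σ : List (Fin cc.N)) :
    BddAbove ((fun x => |deriv (cc.wordMap σ) x|) '' Icc 0 1) :=
  ⟨_, forall_mem_image.2 fun _ => abs_deriv_wordMap_le_pow σ⟩

lemma abs_deriv_wordMap_le_φnorm (σ : List (Fin cc.N)) {x : ℝ} (hx : x ∈ Icc (0 : ℝ) 1) :
    |deriv (cc.wordMap σ) x| ≤ cc.φnorm σ :=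
  le_csSup (bddAbove_abs_deriv_wordMap σ) (mem_image_of_mem _ hx)

lemma diamJ_le_φnorm (σ : List (Fin cc.N)) : cc.diamJ σ ≤ cc.φnorm σ :=
  diamJ_le_of_abs_deriv_le σ fun _ => abs_deriv_wordMap_le_φnorm σ

lemma φnorm_pos (σ : List (Fin cc.N)) : 0 < cc.φnorm σ :=
  (diamJ_pos σ).trans_le (diamJ_le_φnorm σ)

lemma φnorm_le_pow (σ : List (Fin cc.N)) : cc.φnorm σ ≤ cc.b⁻¹ ^ σ.length :=
  csSup_le ((nonempty_Icc.2 zero_le_one).image _)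
    (forall_mem_image.2 fun _ => abs_deriv_wordMap_le_pow σ)

variable (cc) in
lemma nonempty_words (k : ℕ) : Nonempty (Fin k → Fin cc.N) :=
  ⟨fun _ => ⟨0, two_pos.trans_le cc.hN⟩⟩

variable (cc) in
/-- The partition sum `Σ_{σ ∈ Ω_k} ‖φ'_σ‖ ^ t`, whose exponential growth rate in `k` is the
pressure `Q t`. -/
def partitionSum (t : ℝ) (k : ℕ) : ℝ :=
  ∑ σ : Fin k → Fin cc.N, cc.φnorm (List.ofFn σ) ^ t

lemma partitionSum_pos (t : ℝ) (k : ℕ) : 0 < cc.partitionSum t k :=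
  have := cc.nonempty_words k
  Finset.sum_pos (fun _ _ => Real.rpow_pos_of_pos (φnorm_pos _) t) Finset.univ_nonempty

lemma partitionSum_add_le (s : ℝ) {t : ℝ} (ht : 0 ≤ t) (k : ℕ) :
    cc.partitionSum (s + t) k ≤ (cc.b⁻¹ ^ t) ^ k * cc.partitionSum s k := by
  rw [partitionSum, partitionSum, Finset.mul_sum]
  refine Finset.sum_le_sum fun σ _ => ?_
  have hpos := φnorm_pos (List.ofFn σ)
  have hle : cc.φnorm (List.ofFn σ) ≤ cc.b⁻¹ ^ k := by simpa using φnorm_le_pow (List.ofFn σ)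
  rw [add_comm, Real.rpow_add hpos, Real.rpow_pow_comm cc.inv_b_nonneg]
  gcongr

lemma pressure_add_le {s t P P' : ℝ} (ht : 0 ≤ t) (hs : HasGrowthRate (cc.partitionSum s) P)
    (hst : HasGrowthRate (cc.partitionSum (s + t)) P') : P' ≤ P - t * Real.log cc.b := by
  have hb := cc.b_pos
  have hle : P' ≤ P + Real.log (cc.b⁻¹ ^ t) :=
    hst.le_add_log hs one_pos (by positivity) (Eventually.of_forall (partitionSum_pos _))
      (Eventually.of_forall fun k => by
        simpa only [one_mul] using partitionSum_add_le s ht k)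
  rwa [Real.log_rpow (inv_pos.2 hb), Real.log_inv, mul_neg, ← sub_eq_add_neg] at hle

lemma pressure_strictAnti {Q : ℝ → ℝ} (hQ : ∀ t, HasGrowthRate (cc.partitionSum t) (Q t)) :
    StrictAnti Q := fun s t hst => by
  have hdrop : Q t ≤ Q s - (t - s) * Real.log cc.b :=
    pressure_add_le (sub_nonneg.2 hst.le) (hQ s) (by simpa only [add_sub_cancel] using hQ t)
  linarith [mul_pos (sub_pos.2 hst) (Real.log_pos cc.hb1)]

variable {μ : Measure ℝ} {h : ℝ}

lemma IsGibbsLike.measureReal_Jc_pos (hμ : cc.IsGibbsLike μ h) {σ : List (Fin cc.N)}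
    (hσ : σ ≠ []) : 0 < μ.real (cc.Jc σ) :=
  (mul_pos (inv_pos.2 (cc.eta_pos h)) (Real.rpow_pos_of_pos (diamJ_pos σ) h)).trans_le
    (hμ.2.2 σ hσ).1

lemma IsGibbsLike.measureReal_mul_φnorm_rpow_le (hμ : cc.IsGibbsLike μ h) (hh : 0 ≤ h) (r : ℝ)
    {q : ℝ} (hq : 0 ≤ q) {σ : List (Fin cc.N)} (hσ : σ ≠ []) :
    (μ.real (cc.Jc σ) * cc.φnorm σ ^ r) ^ q ≤ cc.eta h ^ q * cc.φnorm σ ^ ((h + r) * q) := by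
  have hη := cc.eta_pos h
  have hd := diamJ_pos σ
  have hp := φnorm_pos σ
  have hmass : μ.real (cc.Jc σ) ≤ cc.eta h * cc.φnorm σ ^ h := by
    refine (hμ.2.2 σ hσ).2.trans ?_
    gcongr
    exact diamJ_le_φnorm σ
  calc (μ.real (cc.Jc σ) * cc.φnorm σ ^ r) ^ q
      ≤ (cc.eta h * cc.φnorm σ ^ h * cc.φnorm σ ^ r) ^ q := by gcongr
    _ = cc.eta h ^ q * cc.φnorm σ ^ ((h + r) * q) := by
        rw [mul_assoc, ← Real.rpow_add hp, Real.mul_rpow hη.le (by positivity),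
          ← Real.rpow_mul hp.le]

lemma IsGibbsLike.growthRate_le_pressure (hμ : cc.IsGibbsLike μ h) (hh : 0 ≤ h) {r q A P : ℝ}
    (hq : 0 ≤ q)
    (hA : HasGrowthRate (fun k => ∑ σ : Fin k → Fin cc.N,
      (μ.real (cc.Jc (List.ofFn σ)) * cc.φnorm (List.ofFn σ) ^ r) ^ q) A)
    (hP : HasGrowthRate (cc.partitionSum ((h + r) * q)) P) : A ≤ P := by
  have hη := cc.eta_pos h
  have hne : ∀ {k : ℕ}, 0 < k → ∀ σ : Fin k → Fin cc.N, List.ofFn σ ≠ [] := fun hk σ =>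
    List.length_pos_iff.1 (by rwa [List.length_ofFn])
  have hle : A ≤ P + Real.log 1 := by
    refine hA.le_add_log hP (C := cc.eta h ^ q) (by positivity) one_pos ?_ ?_
    · filter_upwards [eventually_gt_atTop 0] with k hk
      have := cc.nonempty_words k
      refine Finset.sum_pos (fun σ _ => ?_) Finset.univ_nonempty
      have hmass := hμ.measureReal_Jc_pos (hne hk σ)
      have hnorm := φnorm_pos (List.ofFn σ)
      positivity
    · filter_upwards [eventually_gt_atTop 0] with k hk
      rw [one_pow, mul_one, partitionSum, Finset.mul_sum]
      exact Finset.sum_le_sum fun σ _ => hμ.measureReal_mul_φnorm_rpow_le hh r hq (hne hk σ)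
  rwa [Real.log_one, add_zero] at hle

lemma IsGibbsLike.quantizationDim_le (hμ : cc.IsGibbsLike μ h) (hh : 0 ≤ h) {Q : ℝ → ℝ}
    (hQ : ∀ t, HasGrowthRate (cc.partitionSum t) (Q t)) (hQh : Q h = 0) {r κ : ℝ} (hr : 0 < r)
    (hκ : 0 ≤ κ)
    (hκlim : HasGrowthRate (fun k => ∑ σ : Fin k → Fin cc.N,
      (μ.real (cc.Jc (List.ofFn σ)) * cc.φnorm (List.ofFn σ) ^ r) ^ (κ / (r + κ))) 0) :
    κ ≤ h := by
  have hexp : (h + r) * (κ / (r + κ)) ≤ h := by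
    rw [← (pressure_strictAnti hQ).le_iff_ge, hQh]
    exact hμ.growthRate_le_pressure hh (by positivity) hκlim (hQ _)
  rw [mul_div_assoc', div_le_iff₀ (by positivity)] at hexp
  exact le_of_mul_le_mul_left (by linarith) hr

end Pressure

end CookieCutter

theorem lower_quantization_coefficient_positive (cc : CookieCutter) (Q : ℝ → ℝ)
    (hQ : ∀ t : ℝ, Filter.Tendsto
      (fun k : ℕ => (1 / (k : ℝ)) * Real.log
        (∑ σ : Fin k → Fin cc.N, cc.φnorm (List.ofFn σ) ^ t))
      Filter.atTop (nhds (Q t)))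
    (h : ℝ) (hh0 : 0 < h) (hQh : Q h = 0)
    (μ : MeasureTheory.Measure ℝ) (hμ : cc.IsGibbsLike μ h) (r : ℝ) (hr : 0 < r)
    (κ : ℝ) (hκ : 0 < κ)
    (hκlim : Filter.Tendsto
      (fun n : ℕ => (1 / (n : ℝ)) * Real.log
        (∑ σ : Fin n → Fin cc.N,
          ((μ (cc.Jc (List.ofFn σ))).toReal * cc.φnorm (List.ofFn σ) ^ r) ^ (κ / (r + κ))))
      Filter.atTop (nhds 0)) :
    ∃ C : ℝ, 0 < C ∧ ∀ᶠ n : ℕ in Filter.atTop, C ≤ (n : ℝ) * Vnr μ n r ^ (κ / r) := by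
  have := hμ.1
  have hη := cc.eta_pos h
  have hξ := cc.xi_pos
  have hB := cc.B_pos
  have hκh : κ ≤ h := hμ.quantizationDim_le hh0.le hQ hQh hr hκ.le hκlim
  have hfrostman : FrostmanWith (4 * (cc.xi * cc.B * cc.eta h)) κ μ :=
    (hμ.frostmanWith hh0.le).mono_exponent (by positivity) hκh
  have hsupp : ∀ᵐ x ∂μ, x ∈ Set.Icc (0 : ℝ) 1 :=
    hμ.ae_mem_E.mono fun _ hx => cc.E_subset_Icc hx
  exact hfrostman.exists_pos_eventually_le_mul_Vnr_rpow (by positivity) hκ hr isCompact_Icc hsupp
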